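/- Let M be an m×n complex matrix with rank(M) = r and let p ≥ r. Equip the space of p×m real matrix pairs (realPart, imagPart) — equivalently p×m complex matrices G with entries whose real and imaginary parts are i.i.d. standard real Gaussians — with the corresponding product Gaussian measure. Then for almost every such G, rank(G·M) = r. -/

import Mathlib

open Matrix MeasureTheory ProbabilityTheory

lemma aux_fin (ν : Measure ℝ) [IsProbabilityMeasure ν] [NullSingletonClass ν] (k : ℕ)
    (P : MvPolynomial (Fin k) ℂ) (hP : P ≠ 0) :
    ∀ᵐ g ∂(Measure.pi fun _ : Fin k => ν), MvPolynomial.eval (fun i => (g i : ℂ)) P ≠ 0 := by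
  induction k with
  | zero =>
    refine Filter.Eventually.of_forall fun g => ?_
    obtain ⟨c, rfl⟩ := MvPolynomial.C_surjective (Fin 0) P
    simpa using hP
  | succ k ih =>
    have hcont : Continuous fun z : ℝ × (Fin k → ℝ) =>
        MvPolynomial.eval (Fin.cons (z.1 : ℂ) (fun i => (z.2 i : ℂ)) : Fin (k+1) → ℂ) P := by
      refine (MvPolynomial.continuous_eval P).comp ?_
      refine continuous_pi fun i => ?_
      refine Fin.cases ?_ (fun j => ?_) i
      · simp only [Fin.cons_zero]; fun_prop
      · simp only [Fin.cons_succ]; fun_prop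
    have hmeas : MeasurableSet {z : ℝ × (Fin k → ℝ) |
        MvPolynomial.eval (Fin.cons (z.1 : ℂ) (fun i => (z.2 i : ℂ)) : Fin (k+1) → ℂ) P ≠ 0} :=
      (isOpen_ne.preimage hcont).measurableSet
    have hprod : ∀ᵐ z ∂(ν.prod (Measure.pi fun _ : Fin k => ν)),
        MvPolynomial.eval (Fin.cons (z.1 : ℂ) (fun i => (z.2 i : ℂ)) : Fin (k+1) → ℂ) P ≠ 0 := by
      rw [Measure.ae_prod_iff_ae_ae hmeas]
      rw [Measure.ae_ae_comm (p := fun (x : ℝ) (y : Fin k → ℝ) =>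
        MvPolynomial.eval (Fin.cons (x : ℂ) (fun i => (y i : ℂ)) : Fin (k+1) → ℂ) P ≠ 0) hmeas]
      have hQ : MvPolynomial.finSuccEquiv ℂ k P ≠ 0 := by simpa using hP
      filter_upwards [ih _ (Polynomial.leadingCoeff_ne_zero.mpr hQ)] with y hy
      set q := Polynomial.map (MvPolynomial.eval fun i => (y i : ℂ))
        (MvPolynomial.finSuccEquiv ℂ k P) with hq
      have hq0 : q ≠ 0 := by
        intro h
        apply hy
        have := congrArg (fun t => Polynomial.coeff t
          (MvPolynomial.finSuccEquiv ℂ k P).natDegree) h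
        simpa [hq, Polynomial.coeff_map] using this
      have hfin : {x : ℝ | q.eval (x : ℂ) = 0}.Finite := by
        have := (Polynomial.finite_setOfPred_isRoot hq0).preimage
          (f := fun x : ℝ => (x : ℂ)) (Complex.ofReal_injective.injOn)
        exact this
      have h0 := hfin.measure_zero ν
      rw [ae_iff]
      simpa [MvPolynomial.eval_eq_eval_mv_eval', ← hq] using h0
    have := (measurePreserving_piFinSuccAbove (fun _ : Fin (k+1) => ν) 0).quasiMeasurePreserving.ae
      hprod
    filter_upwards [this] with g hg
    convert hg using 3
    funext i
    refine Fin.cases ?_ (fun j => ?_) i <;> simp [MeasurableEquiv.piFinSuccAbove, Fin.tail]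

lemma aux_gen {σ : Type} [Fintype σ] (ν : Measure ℝ) [IsProbabilityMeasure ν]
    [NullSingletonClass ν] (P : MvPolynomial σ ℂ) (hP : P ≠ 0) :
    ∀ᵐ g ∂(Measure.pi fun _ : σ => ν), MvPolynomial.eval (fun i => (g i : ℂ)) P ≠ 0 := by
  let e := Fintype.equivFin σ
  have h := aux_fin ν _ (MvPolynomial.rename e P)
    (by simpa using (MvPolynomial.rename_injective e e.injective).ne hP)
  have := (measurePreserving_piCongrLeft (fun _ : Fin (Fintype.card σ) => ν)
    e).quasiMeasurePreserving.ae h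
  filter_upwards [this] with g hg
  rw [MvPolynomial.eval_rename] at hg
  convert hg using 3
  funext i
  simp only [Function.comp]
  congr 1
  exact (MeasurableEquiv.piCongrLeft_apply_apply (β := fun _ => ℝ) e g i).symm

lemma aux_LR {m n r : ℕ} (M : Matrix (Fin m) (Fin n) ℂ) (hM : M.rank = r) :
    ∃ (L : Matrix (Fin r) (Fin m) ℂ) (R : Matrix (Fin n) (Fin r) ℂ), L * M * R = 1 := by
  let f := Matrix.toLin' M
  have hr : Module.finrank ℂ (LinearMap.range f) = Module.finrank ℂ (Fin r → ℂ) := by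
    rw [Module.finrank_fin_fun, ← hM]; rfl
  let e := LinearEquiv.ofFinrankEq _ _ hr
  obtain ⟨g, hg⟩ := f.rangeRestrict.exists_rightInverse_of_surjective f.range_rangeRestrict
  obtain ⟨l, hl⟩ := (LinearMap.range f).subtype.exists_leftInverse_of_injective
    (Submodule.ker_subtype _)
  refine ⟨LinearMap.toMatrix' (e.toLinearMap ∘ₗ l),
    LinearMap.toMatrix' (g ∘ₗ e.symm.toLinearMap), ?_⟩
  apply Matrix.toLin'.injective
  rw [Matrix.toLin'_mul, Matrix.toLin'_mul, Matrix.toLin'_toMatrix', Matrix.toLin'_toMatrix',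
    Matrix.toLin'_one]
  refine LinearMap.ext fun x => ?_
  have h1 := LinearMap.congr_fun hg (e.symm x)
  have h2 := LinearMap.congr_fun hl (e.symm x)
  have h3 : f (g (e.symm x)) = (e.symm x : Fin m → ℂ) := congrArg Subtype.val h1
  have h4 : l (e.symm x : Fin m → ℂ) = e.symm x := h2
  change e (l (f (g (e.symm x)))) = x
  rw [h3, h4, e.apply_symm_apply]

theorem stmt_7 (m n p r : ℕ) (M : Matrix (Fin m) (Fin n) ℂ)
    (hM : M.rank = r) (hp : r ≤ p) :
    ∀ᵐ g ∂(Measure.pi fun _ : (Fin p × Fin m) × Bool => gaussianReal 0 1),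
      ((Matrix.of fun i j =>
          Complex.mk (g ((i, j), false)) (g ((i, j), true)) :
            Matrix (Fin p) (Fin m) ℂ) * M).rank = r := by
  obtain ⟨L, R, hLR⟩ := aux_LR M hM
  have : NullSingletonClass (gaussianReal 0 1) := nullSingletonClass_gaussianReal one_ne_zero
  let c : Fin r → Fin p := Fin.castLE hp
  have hc : Function.Injective c := Fin.castLE_injective hp
  let A : Matrix (Fin r) (Fin m) (MvPolynomial ((Fin p × Fin m) × Bool) ℂ) :=
    Matrix.of fun i j => MvPolynomial.X ((c i, j), false) +
      MvPolynomial.C Complex.I * MvPolynomial.X ((c i, j), true)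
  let B : Matrix (Fin m) (Fin r) (MvPolynomial ((Fin p × Fin m) × Bool) ℂ) :=
    (M * R).map MvPolynomial.C
  let AB : Matrix (Fin r) (Fin r) (MvPolynomial ((Fin p × Fin m) × Bool) ℂ) := A * B
  let P : MvPolynomial ((Fin p × Fin m) × Bool) ℂ := AB.det
  have hev : ∀ v, MvPolynomial.eval v P =
      ((Matrix.of fun i j => v ((c i, j), false) + Complex.I * v ((c i, j), true) :
        Matrix (Fin r) (Fin m) ℂ) * (M * R)).det := by
    intro v
    change MvPolynomial.eval v (Matrix.det (A * B : Matrix (Fin r) (Fin r) _)) = _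
    rw [RingHom.map_det, RingHom.mapMatrix_apply, Matrix.map_mul]
    congr 2
    · ext i j; simp [A]
    · ext i j; exact MvPolynomial.eval_C _
  have hP : P ≠ 0 := by
    intro h0
    have h1 := hev (fun x => if x.2 then 0 else
      Function.extend c (fun i => L i x.1.2) 0 x.1.1)
    simp only [h0, map_zero, hc.extend_apply] at h1
    have h2 : (Matrix.of fun i j => L i j : Matrix (Fin r) (Fin m) ℂ) * (M * R) = 1 := by
      rw [← hLR, Matrix.mul_assoc]; rfl
    simp [h2] at h1
  filter_upwards [aux_gen (gaussianReal 0 1) P hP] with g hg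
  rw [hev] at hg
  apply le_antisymm
  · exact (Matrix.rank_mul_le_right _ _).trans hM.le
  · set G : Matrix (Fin p) (Fin m) ℂ := Matrix.of fun i j =>
      Complex.mk (g ((i, j), false)) (g ((i, j), true)) with hG
    have h1 := Matrix.rank_of_det_ne_zero hg
    have h2 : (Matrix.of fun i j => (g ((c i, j), false) : ℂ) +
        Complex.I * (g ((c i, j), true) : ℂ) : Matrix (Fin r) (Fin m) ℂ) * (M * R)
        = (G * M).submatrix c id * R := by
      rw [← Matrix.mul_assoc]
      congr 1
      ext i j
      simp only [Matrix.mul_apply, Matrix.submatrix_apply, hG, Matrix.of_apply, id]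
      refine Finset.sum_congr rfl fun k _ => ?_
      congr 1
      apply Complex.ext <;> simp
    rw [h2, Fintype.card_fin] at h1
    calc r = _ := h1.symm
      _ ≤ _ := Matrix.rank_mul_le_left _ _
      _ ≤ _ := Matrix.rank_submatrix_le _ _ _
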